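/- arXiv:2012.01958 — 3 statements merged into one kernel-verified Lean document; each statement's English description precedes it below -/
import Mathlib

section
/- Fix integers n ≥ 1, d ≥ 1 and natural numbers α_0,…,α_n. If a ∈ ℕ^{n+1} satisfies a_0+⋯+a_n ≥ 2d−1, then there exists b ∈ ℕ^{n+1} with b_i ≤ a_i for every i, b_0+⋯+b_n = d, and d ∣ α_0b_0+⋯+α_nb_n. -/
/-!
Read an exponent vector `a` as the multiset in which each index `i` occurs `a i` times. Its degree
is then the cardinality, its `α`-weight is the sum of `α` over the multiset, and the vectors below
`a` are the submultisets, so the Erdős–Ginzburg–Ziv theorem applies.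
-/

section

variable {ι : Type*} {d : ℕ}

theorem card_toMultiset_eq_degree (a : ι →₀ ℕ) : a.toMultiset.card = a.degree :=
  Finsupp.card_toMultiset a

theorem sum_map_toMultiset_eq_weight {M : Type*} [AddCommMonoid M] (w : ι → M) (a : ι →₀ ℕ) :
    (a.toMultiset.map w).sum = Finsupp.weight w a := by
  simp [Finsupp.toMultiset_apply, Finsupp.multiset_map_sum, Finsupp.multiset_sum_sum,
    Multiset.map_nsmul, Multiset.sum_nsmul, Finsupp.weight_apply]

theorem exists_multiset_le_card_eq_dvd_sum_map (f : ι → ℤ) {s : Multiset ι}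
    (hs : 2 * d - 1 ≤ s.card) :
    ∃ t ≤ s, t.card = d ∧ (d : ℤ) ∣ (t.map f).sum := by
  classical
  obtain ⟨t, hts, htd, hdvd⟩ :=
    Int.erdos_ginzburg_ziv (s := s.toEnumFinset) (f ∘ Prod.fst) (by simpa using hs)
  exact ⟨t.1.map Prod.fst, Multiset.map_fst_le_of_subset_toEnumFinset hts, by simpa using htd,
    by simpa using hdvd⟩

theorem stmt1_general (α : ι → ℤ) {a : ι →₀ ℕ} (ha : 2 * d - 1 ≤ a.degree) :
    ∃ b ≤ a, b.degree = d ∧ (d : ℤ) ∣ Finsupp.weight α b := by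
  classical
  rw [← card_toMultiset_eq_degree] at ha
  obtain ⟨t, hta, htd, hdvd⟩ := exists_multiset_le_card_eq_dvd_sum_map α ha
  obtain ⟨b, rfl⟩ := Finsupp.orderIsoMultiset.surjective t
  exact ⟨b, Finsupp.orderIsoMultiset.le_iff_le.mp hta, (card_toMultiset_eq_degree b).symm.trans htd,
    sum_map_toMultiset_eq_weight α b ▸ hdvd⟩

end

/-- Erdős–Ginzburg–Ziv step: any exponent vector of degree at least 2d−1 dominates
a Λ-invariant exponent vector of degree exactly d (key step in Theorem 3.1). -/
theorem stmt1 (n d : ℕ) (hn : 1 ≤ n) (hd : 1 ≤ d) (α : Fin (n + 1) → ℕ)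
    (a : Fin (n + 1) → ℕ) (ha : 2 * d - 1 ≤ ∑ i, a i) :
    ∃ b : Fin (n + 1) → ℕ,
      (∀ i, b i ≤ a i) ∧ (∑ i, b i = d) ∧ d ∣ ∑ i, α i * b i := by
  obtain ⟨b, hba, hbd, hdvd⟩ := stmt1_general (fun i ↦ (α i : ℤ))
    (a := Finsupp.equivFunOnFinite.symm a) (by simpa [Finsupp.degree_eq_sum] using ha)
  exact ⟨b, hba, by rwa [← Finsupp.degree_eq_sum],
    by simpa [Finsupp.weight_eq_sum, mul_comm, ← Int.natCast_dvd_natCast] using hdvd⟩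
end

section
/- Let d ≥ 3 be a prime number and let a, b be integers with 0 < a < b < d. Then 2 · #{(y₀,y₁,y₂) ∈ ℕ³ : y₀+y₁+y₂ = d and d ∣ a·y₁ + b·y₂} = d + 5; that is, the number μ_d of degree-d monomials in ℂ[x₀,x₁,x₂] invariant under the cyclic group ⟨diag(1, e^a, e^b)⟩ (e a primitive d-th root of unity) equals (d+5)/2. -/
/-!
Dropping the exponent of `x₀`, the monomials become the points of the lattice
`{(u, v) | d ∣ a * u + b * v}` in the triangle `u + v ≤ d` of the square `[0, d]²`. The point
reflection `(u, v) ↦ (d - u, d - v)` preserves the lattice and exchanges the triangle with the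
complementary one `d ≤ u + v`; the two share the diagonal `u + v = d`. So twice the number of
monomials is the number of lattice points of the square plus the number on its diagonal, and both
are counted by solving linear congruences modulo `d`.
-/

open Finset

section LinearCongruence

variable {m : ℕ} {b c : ℤ}

lemma gcd_dvd_iff_exists_dvd_add_mul (hm : m ≠ 0) :
    (Int.gcd b m : ℤ) ∣ c ↔ ∃ v : ℕ, (m : ℤ) ∣ c + b * v := by
  constructor
  · rintro ⟨q, rfl⟩
    obtain ⟨v, hv⟩ := Int.eq_ofNat_of_zero_le
      (Int.emod_nonneg (-Int.gcdA b m * q) (Int.natCast_ne_zero.mpr hm))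
    have hv' : (v : ℤ) ≡ -Int.gcdA b m * q [ZMOD m] := hv ▸ Int.mod_modEq _ _
    refine ⟨v, Int.modEq_zero_iff_dvd.mp ?_⟩
    calc (Int.gcd b m : ℤ) * q + b * v
        ≡ Int.gcd b m * q + b * (-Int.gcdA b m * q) [ZMOD m] := (hv'.mul_left b).add_left _
      _ = m * (Int.gcdB b m * q) := by rw [Int.gcd_eq_gcd_ab]; ring
      _ ≡ 0 [ZMOD m] := Int.modEq_zero_iff_dvd.mpr (dvd_mul_right _ _)
  · rintro ⟨v, hv⟩
    exact (dvd_add_left ((Int.gcd_dvd_left ..).mul_right _)).mp ((Int.gcd_dvd_right ..).trans hv)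

lemma mul_modEq_mul_left_iff_modEq_div_gcd (hm : 0 < m) {v w : ℕ} :
    b * v ≡ b * w [ZMOD m] ↔ v ≡ w [MOD m / Int.gcd b m] := by
  rw [← Int.natCast_modEq_iff, Int.natCast_div, Int.gcd_comm]
  refine ⟨Int.ModEq.cancel_left_div_gcd (mod_cast hm), fun h ↦ ?_⟩
  have hdvd : (m : ℤ) ∣ b * (m / Int.gcd m b) := by
    rw [← Int.mul_ediv_assoc _ (Int.gcd_dvd_left ..), mul_comm,
      Int.mul_ediv_assoc _ (Int.gcd_dvd_right ..)]
    exact dvd_mul_right _ _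
  exact h.mul_left'.of_dvd hdvd

lemma card_filter_range_dvd_add_mul (hm : 0 < m) (k : ℕ) :
    #{v ∈ range (m * k) | (m : ℤ) ∣ c + b * (v : ℕ)} =
      if (Int.gcd b m : ℤ) ∣ c then Int.gcd b m * k else 0 := by
  split_ifs with hc
  · obtain ⟨w, hw⟩ := (gcd_dvd_iff_exists_dvd_add_mul hm.ne').mp hc
    have hiff (v : ℕ) : (m : ℤ) ∣ c + b * v ↔ v ≡ w [MOD m / Int.gcd b m] := by
      have hsplit : c + b * v = c + b * w + (b * v - b * w) := by ring
      rw [← mul_modEq_mul_left_iff_modEq_div_gcd hm, Int.modEq_comm, Int.modEq_iff_dvd, hsplit,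
        dvd_add_right hw]
    have hgcd : Int.gcd b m ∣ m := Int.natCast_dvd_natCast.mp (Int.gcd_dvd_right ..)
    have hr : 0 < m / Int.gcd b m :=
      Nat.div_pos (Nat.le_of_dvd hm hgcd) (Nat.pos_of_dvd_of_pos hgcd hm)
    have hmk : m * k = m / Int.gcd b m * (Int.gcd b m * k) := by
      rw [← mul_assoc, Nat.div_mul_cancel hgcd]
    simp only [hiff]
    rw [← Nat.count_eq_card_filter_range, Nat.count_modEq_card _ hr, hmk, Nat.mul_mod_right,
      Nat.mul_div_cancel_left _ hr]
    simp
  · rw [card_eq_zero, filter_eq_empty_iff]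
    exact fun v _ hv ↦ hc ((gcd_dvd_iff_exists_dvd_add_mul hm.ne').mpr ⟨v, hv⟩)

lemma card_filter_range_dvd_mul (hm : 0 < m) (k : ℕ) :
    #{v ∈ range (m * k) | (m : ℤ) ∣ b * (v : ℕ)} = Int.gcd b m * k := by
  simpa using card_filter_range_dvd_add_mul (c := 0) hm k

lemma card_filter_range_succ_dvd_add_mul (hm : 0 < m) :
    #{v ∈ range (m + 1) | (m : ℤ) ∣ c + b * (v : ℕ)} =
      (if (Int.gcd b m : ℤ) ∣ c then Int.gcd b m else 0) + if (m : ℤ) ∣ c then 1 else 0 := by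
  have hcount := card_filter_range_dvd_add_mul (b := b) (c := c) hm 1
  simp only [mul_one] at hcount
  simp only [card_filter] at hcount ⊢
  rw [sum_range_succ, hcount]
  simp only [dvd_add_left (dvd_mul_left (m : ℤ) b)]

lemma card_filter_range_succ_dvd_mul (hm : 0 < m) :
    #{v ∈ range (m + 1) | (m : ℤ) ∣ b * (v : ℕ)} = Int.gcd b m + 1 := by
  simpa using card_filter_range_succ_dvd_add_mul (c := 0) hm

end LinearCongruence

lemma two_mul_card_filter_add_le {d : ℕ} {s : Finset (ℕ × ℕ)} (hle : ∀ p ∈ s, p ≤ (d, d))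
    (hs : ∀ p ∈ s, (d, d) - p ∈ s) :
    2 * #{p ∈ s | p.1 + p.2 ≤ d} = #s + #{p ∈ s | p.1 + p.2 = d} := by
  have hreflect : #{p ∈ s | p.1 + p.2 ≤ d} = #{p ∈ s | d ≤ p.1 + p.2} := by
    refine card_bij' (fun p _ ↦ (d, d) - p) (fun p _ ↦ (d, d) - p) ?_ ?_ ?_ ?_ <;>
      simp only [mem_filter] <;> rintro ⟨u, v⟩ ⟨hp, h⟩ <;> obtain ⟨hu, hv⟩ := hle _ hp
    · exact ⟨hs _ hp, by simp only [Prod.mk_sub_mk]; omega⟩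
    · exact ⟨hs _ hp, by simp only [Prod.mk_sub_mk]; omega⟩
    · exact tsub_tsub_cancel_of_le (hle _ hp)
    · exact tsub_tsub_cancel_of_le (hle _ hp)
  have hunion : {p ∈ s | p.1 + p.2 ≤ d} ∪ {p ∈ s | d ≤ p.1 + p.2} = s := by
    rw [← filter_or]
    exact filter_true_of_mem fun p _ ↦ le_total _ _
  have hinter : {p ∈ s | p.1 + p.2 ≤ d} ∩ {p ∈ s | d ≤ p.1 + p.2} = {p ∈ s | p.1 + p.2 = d} := by
    rw [← filter_and]
    exact filter_congr fun p _ ↦ le_antisymm_iff.symm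
  have hcard := card_union_add_card_inter {p ∈ s | p.1 + p.2 ≤ d} {p ∈ s | d ≤ p.1 + p.2}
  rw [hunion, hinter, ← hreflect] at hcard
  omega

/-- The exponents `(u, v)` in the square `[0, d]²` for which `x₁ ^ u * x₂ ^ v` is invariant under
`diag(1, e ^ a, e ^ b)`, where `e` is a primitive `d`-th root of unity. Since `x₀` is invariant,
the invariant monomials of degree `d` are the points of this set with `u + v ≤ d`. -/
def invariantExponents (d : ℕ) (a b : ℤ) : Finset (ℕ × ℕ) :=
  {p ∈ range (d + 1) ×ˢ range (d + 1) | (d : ℤ) ∣ a * (p.1 : ℕ) + b * (p.2 : ℕ)}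

section InvariantExponents

variable {d : ℕ} {a b : ℤ}

lemma mem_invariantExponents {p : ℕ × ℕ} :
    p ∈ invariantExponents d a b ↔ p ≤ (d, d) ∧ (d : ℤ) ∣ a * p.1 + b * p.2 := by
  simp [invariantExponents, Prod.le_def]

lemma sub_mem_invariantExponents {p : ℕ × ℕ} (hp : p ∈ invariantExponents d a b) :
    (d, d) - p ∈ invariantExponents d a b := by
  rw [mem_invariantExponents] at hp ⊢
  obtain ⟨⟨hu, hv⟩, h⟩ := hp
  refine ⟨tsub_le_self, ?_⟩
  have hsub : a * ((d, d) - p).1 + b * ((d, d) - p).2 = d * (a + b) - (a * p.1 + b * p.2) := by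
    rw [Prod.fst_sub, Prod.snd_sub, Nat.cast_sub hu, Nat.cast_sub hv]
    ring
  exact hsub ▸ dvd_sub (dvd_mul_right _ _) h

lemma card_invariantExponents (hd : 0 < d) :
    #(invariantExponents d a b) =
      d * Int.gcd a (Int.gcd b d) + Int.gcd a d + Int.gcd b d + 1 := by
  have hgcd : Int.gcd b d ∣ d := Int.natCast_dvd_natCast.mp (Int.gcd_dvd_right ..)
  have hrow : #{u ∈ range d | (Int.gcd b d : ℤ) ∣ a * (u : ℕ)} * Int.gcd b d =
      d * Int.gcd a (Int.gcd b d) := by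
    obtain ⟨k, hk⟩ := hgcd
    have hcount := card_filter_range_dvd_mul (b := a) (Nat.pos_of_dvd_of_pos ⟨k, hk⟩ hd) k
    rw [← hk] at hcount
    rw [hcount, mul_assoc, mul_comm k, ← hk, mul_comm]
  have hlast : (Int.gcd b d : ℤ) ∣ a * d := (Int.natCast_dvd_natCast.mpr hgcd).mul_left a
  calc #(invariantExponents d a b)
      = ∑ u ∈ range (d + 1), #{v ∈ range (d + 1) | (d : ℤ) ∣ a * (u : ℕ) + b * (v : ℕ)} := by
        simp only [invariantExponents, card_filter, sum_product]
    _ = (∑ u ∈ range (d + 1), if (Int.gcd b d : ℤ) ∣ a * (u : ℕ) then Int.gcd b d else 0) +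
          #{u ∈ range (d + 1) | (d : ℤ) ∣ a * (u : ℕ)} := by
        simp only [card_filter_range_succ_dvd_add_mul hd, sum_add_distrib, card_filter]
    _ = d * Int.gcd a (Int.gcd b d) + Int.gcd b d + (Int.gcd a d + 1) := by
        rw [card_filter_range_succ_dvd_mul hd, sum_range_succ, if_pos hlast, ← sum_filter,
          sum_const, smul_eq_mul, hrow]
    _ = _ := by ring

lemma card_filter_add_eq_invariantExponents (hd : 0 < d) :
    #{p ∈ invariantExponents d a b | p.1 + p.2 = d} = Int.gcd (b - a) d + 1 := by
  rw [← card_filter_range_succ_dvd_mul hd]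
  have hdiag {u v : ℕ} (h : u + v = d) : (d : ℤ) ∣ a * u + b * v ↔ (d : ℤ) ∣ (b - a) * v := by
    have hsplit : a * u + b * v = d * a + (b - a) * v := by
      rw [← h]
      push_cast
      ring
    rw [hsplit, dvd_add_right (dvd_mul_right _ _)]
  refine card_bij' (fun p _ ↦ p.2) (fun v _ ↦ (d - v, v)) ?_ ?_ ?_ ?_
  · rintro ⟨u, v⟩ hp
    rw [mem_filter, mem_invariantExponents] at hp
    exact mem_filter.mpr ⟨mem_range_succ_iff.mpr hp.1.1.2, (hdiag hp.2).mp hp.1.2⟩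
  · intro v hv
    rw [mem_filter, mem_range_succ_iff] at hv
    have hsum : d - v + v = d := Nat.sub_add_cancel hv.1
    exact mem_filter.mpr ⟨mem_invariantExponents.mpr
      ⟨⟨Nat.sub_le d v, hv.1⟩, (hdiag hsum).mpr hv.2⟩, hsum⟩
  · rintro ⟨u, v⟩ hp
    exact Prod.ext (Nat.sub_eq_of_eq_add (mem_filter.mp hp).2.symm) rfl
  · exact fun v _ ↦ rfl

lemma ncard_invariant_monomials :
    Set.ncard {y : ℕ × ℕ × ℕ |
        y.1 + y.2.1 + y.2.2 = d ∧ (d : ℤ) ∣ a * y.2.1 + b * y.2.2} =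
      #{p ∈ invariantExponents d a b | p.1 + p.2 ≤ d} := by
  rw [← Set.ncard_coe_finset]
  refine Set.ncard_congr (fun y _ ↦ y.2) ?_ ?_ ?_
  · rintro ⟨x, u, v⟩ ⟨hsum, h⟩
    simp only [coe_filter, Set.mem_ofPred_eq, mem_invariantExponents, Prod.mk_le_mk] at hsum h ⊢
    exact ⟨⟨by omega, h⟩, by omega⟩
  · rintro ⟨x, p⟩ ⟨x', q⟩ ⟨hx, -⟩ ⟨hx', -⟩ (rfl : p = q)
    simp only [Prod.mk.injEq, and_true] at hx hx' ⊢
    omega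
  · rintro ⟨u, v⟩ hp
    simp only [coe_filter, Set.mem_ofPred_eq, mem_invariantExponents] at hp
    exact ⟨(d - (u + v), u, v), ⟨by dsimp only; omega, hp.1.2⟩, rfl⟩

end InvariantExponents

theorem stmt9_general (d : ℕ) (a b : ℤ) (hd : 0 < d) :
    2 * Set.ncard {y : ℕ × ℕ × ℕ |
        y.1 + y.2.1 + y.2.2 = d ∧ (d : ℤ) ∣ a * y.2.1 + b * y.2.2} =
      d * Int.gcd a (Int.gcd b d) + Int.gcd a d + Int.gcd b d + Int.gcd (b - a) d + 2 := by
  rw [ncard_invariant_monomials,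
    two_mul_card_filter_add_le (fun _ hp ↦ (mem_invariantExponents.mp hp).1)
      (fun _ ↦ sub_mem_invariantExponents),
    card_invariantExponents hd, card_filter_add_eq_invariantExponents hd]
  ring

/-- Prime case of Corollary 4.12(i): for d prime, the number of degree-d monomials
invariant under ⟨diag(1,e^a,e^b)⟩ is μ_d = (d+5)/2. -/
theorem stmt9 (d a b : ℕ) (hd : 3 ≤ d) (hp : Nat.Prime d)
    (ha : 0 < a) (hab : a < b) (hbd : b < d) :
    2 * Set.ncard {y : ℕ × ℕ × ℕ |
        y.1 + y.2.1 + y.2.2 = d ∧ d ∣ a * y.2.1 + b * y.2.2} = d + 5 := by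
  have hgcd (c : ℕ) (hc : c ≠ 0) (hcd : c < d) : c.gcd d = 1 :=
    (Nat.coprime_of_lt_prime hc hcd hp).symm
  simpa [← Nat.cast_sub hab.le, ← Int.natCast_dvd_natCast, hgcd a (by omega) (by omega),
    hgcd b (by omega) (by omega), hgcd (b - a) (by omega) (by omega)]
    using stmt9_general d a b hp.pos
end

section
/- Let t ≥ 1 and let w ∈ H_{3t} have exactly one nonzero coordinate, say w_i > 0 and the other two coordinates equal to 0. Then 3t ∣ w_i; more precisely w = A·f_i for some A ∈ ℕ, where f₁ = (3t,0,0), f₂ = (0,3t,0), f₃ = (0,0,3t). -/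
/-- `HH t` is the submonoid H_{3t} of ℕ³ of the paper: `HH 1` = H₃ is generated by
(3,0,0),(0,3,0),(0,0,3),(1,1,1); for t ≥ 2, H_{3t} is generated by (3t,0,0),(0,3t,0),
(0,0,3t) together with (1,1,1) + H_{3(t−1)}.  (Here `HH 0 = ⊥ = {0}`, so that the
t = 1 case of the recursion reproduces exactly H₃.) -/
def HH : ℕ → AddSubmonoid (Fin 3 → ℕ)
  | 0 => ⊥
  | (t + 1) => AddSubmonoid.closure
      ({Pi.single 0 (3 * (t + 1)), Pi.single 1 (3 * (t + 1)),
          Pi.single 2 (3 * (t + 1))} ∪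
        (fun h => (fun _ => 1) + h) '' ((HH t : AddSubmonoid (Fin 3 → ℕ)) : Set (Fin 3 → ℕ)))

/-!
The vectors with support contained in a fixed set form a face of `ℕ³`: a sum has this property only
if both summands do. Hence `w ∈ H_{3t}` is a sum of generators supported inside the support of `w`.
If `w` has a zero coordinate, this excludes all generators `(1, 1, 1) + h`, whose coordinates are
positive, and only the `3t · e_l` with `w_l ≠ 0` remain.
-/

open Function

theorem mem_closure_sep_of_forall_add {M : Type*} [AddZeroClass M] {S : Set M} {p : M → Prop}
    (hp : ∀ x y, p (x + y) → p x ∧ p y) {x : M} (hx : x ∈ AddSubmonoid.closure S) (hpx : p x) :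
    x ∈ AddSubmonoid.closure {s ∈ S | p s} := by
  induction hx using AddSubmonoid.closure_induction with
  | mem s hs => exact AddSubmonoid.subset_closure ⟨hs, hpx⟩
  | zero => exact zero_mem _
  | add y z _ _ ihy ihz =>
    obtain ⟨hpy, hpz⟩ := hp y z hpx
    exact add_mem (ihy hpy) (ihz hpz)

section Support

variable {ι M : Type*} [AddCommMonoid M] [Subsingleton (AddUnits M)]

theorem support_add_eq_union (f g : ι → M) : support (f + g) = support f ∪ support g := by
  ext l
  simp only [mem_support, Pi.add_apply, ne_eq, add_eq_zero, not_and_or, Set.mem_union]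

theorem mem_closure_sep_support_subset {S : Set (ι → M)} {w : ι → M}
    (hw : w ∈ AddSubmonoid.closure S) :
    w ∈ AddSubmonoid.closure {s ∈ S | support s ⊆ support w} :=
  mem_closure_sep_of_forall_add (p := fun s ↦ support s ⊆ support w)
    (fun f g h ↦ Set.union_subset_iff.mp (support_add_eq_union f g ▸ h)) hw subset_rfl

end Support

theorem support_fin_three_eq_singleton {M : Type*} [Zero M] {w : Fin 3 → M} {i j k : Fin 3}
    (hij : i ≠ j) (hik : i ≠ k) (hjk : j ≠ k) (hwi : w i ≠ 0) (hwj : w j = 0) (hwk : w k = 0) :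
    support w = {i} := by
  ext l
  obtain rfl | rfl | rfl : l = i ∨ l = j ∨ l = k := by omega
  · simp [hwi]
  · simp [hwj, hij.symm]
  · simp [hwk, hik.symm]

theorem HH_succ (t : ℕ) :
    HH (t + 1) = AddSubmonoid.closure (Set.range (fun l ↦ Pi.single l (3 * (t + 1))) ∪
      (fun h ↦ 1 + h) '' (HH t : Set (Fin 3 → ℕ))) := by
  have range_eq (f : Fin 3 → Fin 3 → ℕ) : Set.range f = {f 0, f 1, f 2} := by
    ext v
    simp [Fin.exists_fin_succ, eq_comm]
  rw [range_eq]
  rfl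

theorem stmt13_general {t : ℕ} {w : Fin 3 → ℕ} (hw : w ∈ HH t) {j : Fin 3} (hwj : w j = 0) :
    w ∈ AddSubmonoid.closure ((fun l ↦ Pi.single l (3 * t)) '' support w) := by
  cases t with
  | zero =>
    obtain rfl : w = 0 := hw
    exact zero_mem _
  | succ t =>
    rw [HH_succ] at hw
    refine AddSubmonoid.closure_mono ?_ (mem_closure_sep_support_subset hw)
    rintro _ ⟨⟨l, rfl⟩ | ⟨h, -, rfl⟩, hsupp⟩
    · exact ⟨l, hsupp (by simp), rfl⟩
    · have hj : j ∈ support (1 + h) := by simp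
      exact absurd hwj (hsupp hj)

/-- Remark 5.6: an element of H_{3t} with exactly one nonzero coordinate is a
multiple of the corresponding generator fᵢ = 3t·eᵢ; in particular 3t ∣ wᵢ. -/
theorem stmt13 (t : ℕ) (ht : 1 ≤ t) (w : Fin 3 → ℕ) (hw : w ∈ HH t)
    (i j k : Fin 3) (hij : i ≠ j) (hik : i ≠ k) (hjk : j ≠ k)
    (hwi : 0 < w i) (hwj : w j = 0) (hwk : w k = 0) :
    3 * t ∣ w i ∧ ∃ A : ℕ, w = A • Pi.single i (3 * t) := by
  have hmem := stmt13_general hw hwj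
  rw [support_fin_three_eq_singleton hij hik hjk hwi.ne' hwj hwk, Set.image_singleton] at hmem
  obtain ⟨A, rfl⟩ := AddSubmonoid.mem_closure_singleton.mp hmem
  exact ⟨by simp, A, rfl⟩
end
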